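/- Let ε > 0, let W_0^ε(x,k) = (1/(√π ε)) e^{−x²} e^{−(k−x)²/ε²} (the Wigner transform of the Gauss–Fresnel state e^{−x²/2} e^{ix²/(2ε)}), and let W_h^ε(x,k,t) := W_0^ε(g_h^{−t}(x,k)) be its propagation along the harmonic flow, which solves ∂_t W + k∂_x W − x∂_k W = 0. Then at each focal point (x_ν, t_ν) = (0, νπ − π/4), ν = 1, 2, …, of the harmonic-oscillator ray field with initial phase S_0(x) = x²/2, the momentum integral of W_h^ε satisfies exactly ∫_ℝ W_h^ε(0, k, t_ν) dk = √2 / ε. -/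

import Mathlib

open MeasureTheory

/-- The harmonic-oscillator Hamiltonian flow
`g_h^t(q,p) = (q cos t + p sin t, p cos t - q sin t)`; its inverse is `g_h^{-t}`. -/
noncomputable def gh (t : ℝ) : ℝ × ℝ → ℝ × ℝ := fun z =>
  (z.1 * Real.cos t + z.2 * Real.sin t, z.2 * Real.cos t - z.1 * Real.sin t)

/-- The Wigner transform of the Gauss–Fresnel state `e^{-x²/2} e^{ix²/(2ε)}`:
`W_0^ε(x,k) = (1/(√π ε)) e^{-x²} e^{-(k-x)²/ε²}`. -/
noncomputable def W0GF (ε : ℝ) : ℝ × ℝ → ℝ := fun p =>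
  (1 / (Real.sqrt Real.pi * ε)) * Real.exp (-p.1 ^ 2) * Real.exp (-(p.2 - p.1) ^ 2 / ε ^ 2)

/-!
Along the flow, Hamilton's equations make the time derivative of `f ∘ gh (-t)` cancel against the
transport terms for every differentiable `f`, by the chain rule alone.

For the momentum integral, `x` and `t` being fixed, the exponent of `W0GF ε (gh (-t) (x, k))` is a
quadratic polynomial in `k`. Completing the square gives the position density `exp (-x² / D) / √D`
with `D = J² + ε² sin² t`, where `J = cos t + sin t` is the Jacobian of the rays. At a focal time
`J` vanishes and `sin² t = 1 / 2`, so the density at the origin is `1 / √(ε² / 2)`.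
-/

section Transport

variable {E : Type*} [NormedAddCommGroup E] [NormedSpace ℝ E]

theorem hasDerivAt_gh_time (p : ℝ × ℝ) (t : ℝ) :
    HasDerivAt (fun s => gh s p) ((gh t p).2, -(gh t p).1) t := by
  have hcos := Real.hasDerivAt_cos t
  have hsin := Real.hasDerivAt_sin t
  refine (((hcos.const_mul p.1).add (hsin.const_mul p.2)).prodMk
    ((hcos.const_mul p.2).sub (hsin.const_mul p.1))).congr_deriv ?_
  ext <;> simp only [gh] <;> ring

theorem hasDerivAt_gh_neg_time (p : ℝ × ℝ) (t : ℝ) :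
    HasDerivAt (fun s => gh (-s) p) (-(gh (-t) p).2, (gh (-t) p).1) t := by
  simpa [Function.comp_def] using (hasDerivAt_gh_time p (-t)).scomp t (hasDerivAt_neg t)

theorem hasDerivAt_gh_position (t x k : ℝ) :
    HasDerivAt (fun y => gh t (y, k)) (Real.cos t, -Real.sin t) x :=
  ((hasDerivAt_mul_const (Real.cos t)).add_const (k * Real.sin t)).prodMk
    ((hasDerivAt_mul_const (Real.sin t)).const_sub (k * Real.cos t))

theorem hasDerivAt_gh_momentum (t x k : ℝ) :
    HasDerivAt (fun l => gh t (x, l)) (Real.sin t, Real.cos t) k :=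
  ((hasDerivAt_mul_const (Real.sin t)).const_add (x * Real.cos t)).prodMk
    ((hasDerivAt_mul_const (Real.cos t)).sub_const (x * Real.sin t))

theorem deriv_comp_gh_neg_transport {f : ℝ × ℝ → E} {t : ℝ} {p : ℝ × ℝ}
    (hf : DifferentiableAt ℝ f (gh (-t) p)) :
    deriv (fun s => f (gh (-s) p)) t
      + p.2 • deriv (fun x => f (gh (-t) (x, p.2))) p.1
      - p.1 • deriv (fun k => f (gh (-t) (p.1, k))) p.2 = 0 := by
  have time_deriv := (hf.hasFDerivAt.comp_hasDerivAt t (hasDerivAt_gh_neg_time p t)).deriv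
  have position_deriv :=
    (hf.hasFDerivAt.comp_hasDerivAt p.1 (hasDerivAt_gh_position (-t) p.1 p.2)).deriv
  have momentum_deriv :=
    (hf.hasFDerivAt.comp_hasDerivAt p.2 (hasDerivAt_gh_momentum (-t) p.1 p.2)).deriv
  have directions_cancel : ((-(gh (-t) p).2, (gh (-t) p).1) : ℝ × ℝ)
      + p.2 • (Real.cos (-t), -Real.sin (-t)) - p.1 • (Real.sin (-t), Real.cos (-t)) = 0 := by
    ext <;> simp [gh]
  simp only [Function.comp_def] at time_deriv position_deriv momentum_deriv
  rw [time_deriv, position_deriv, momentum_deriv, ← map_smul, ← map_smul, ← map_add, ← map_sub,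
    directions_cancel, map_zero]

end Transport

theorem differentiable_W0GF (ε : ℝ) : Differentiable ℝ (W0GF ε) := by
  unfold W0GF
  fun_prop

/-- The Jacobian `∂x̃/∂q` of the harmonic-oscillator rays `x̃(t; q) = q (cos t + sin t)` issued from
the initial phase `S₀(x) = x² / 2`; the focal times are its zeros. -/
noncomputable def rayJacobian (t : ℝ) : ℝ :=
  Real.cos t + Real.sin t

/-- The squared width `D` of the position density `exp (-x² / D) / √D` of the Gauss–Fresnel state
at time `t`: the geometric spreading of the rays plus an `ε`-correction that keeps it positive on
the caustic. -/
noncomputable def densityWidthSq (ε t : ℝ) : ℝ :=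
  rayJacobian t ^ 2 + (ε * Real.sin t) ^ 2

theorem rayJacobian_int_mul_pi_sub_pi_div_four (ν : ℤ) :
    rayJacobian (ν * Real.pi - Real.pi / 4) = 0 := by
  simp [rayJacobian, Real.cos_sub, Real.sin_sub, Real.sin_int_mul_pi]

theorem densityWidthSq_pos {ε : ℝ} (hε : ε ≠ 0) (t : ℝ) : 0 < densityWidthSq ε t := by
  unfold densityWidthSq rayJacobian
  by_cases hsin : Real.sin t = 0
  · have hcos : Real.cos t ^ 2 = 1 := by simpa [hsin] using Real.sin_sq_add_cos_sq t
    simp [hsin, hcos]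
  · positivity

theorem densityWidthSq_of_rayJacobian_eq_zero {t : ℝ} (ht : rayJacobian t = 0) (ε : ℝ) :
    densityWidthSq ε t = ε ^ 2 / 2 := by
  have cos_eq : Real.cos t = -Real.sin t := eq_neg_of_add_eq_zero_left ht
  have sin_sq : Real.sin t ^ 2 = 1 / 2 := by
    have := Real.sin_sq_add_cos_sq t
    rw [cos_eq] at this
    linarith
  rw [densityWidthSq, ht, mul_pow, sin_sq]
  ring

/-- The mean momentum at the point `x` at time `t`: the `k` at which the Gaussian
`k ↦ W0GF ε (gh (-t) (x, k))` is centred. -/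
noncomputable def momentumCenter (ε t x : ℝ) : ℝ :=
  x * (ε ^ 2 * Real.sin t * Real.cos t + Real.cos t ^ 2 - Real.sin t ^ 2) / densityWidthSq ε t

theorem W0GF_exponent_gh_neg_complete_square {ε : ℝ} (hε : ε ≠ 0) (t x k : ℝ) :
    -(gh (-t) (x, k)).1 ^ 2 + -((gh (-t) (x, k)).2 - (gh (-t) (x, k)).1) ^ 2 / ε ^ 2 =
      -x ^ 2 / densityWidthSq ε t
        + -(densityWidthSq ε t / ε ^ 2) * (k - momentumCenter ε t x) ^ 2 := by
  have hD : densityWidthSq ε t ≠ 0 := (densityWidthSq_pos hε t).ne'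
  simp only [gh, momentumCenter, Real.cos_neg, Real.sin_neg]
  field_simp
  unfold densityWidthSq rayJacobian
  -- The `x²` coefficients differ by `ε²` times `(det (gh t))² - 1`, and `gh t` is a rotation.
  linear_combination (-(ε ^ 2 * x ^ 2) * (Real.sin t ^ 2 + Real.cos t ^ 2 + 1)) *
    Real.sin_sq_add_cos_sq t

theorem W0GF_gh_neg_eq_gaussian {ε : ℝ} (hε : ε ≠ 0) (t x k : ℝ) :
    W0GF ε (gh (-t) (x, k)) =
      1 / (Real.sqrt Real.pi * ε) * Real.exp (-x ^ 2 / densityWidthSq ε t) *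
        Real.exp (-(densityWidthSq ε t / ε ^ 2) * (k - momentumCenter ε t x) ^ 2) := by
  rw [W0GF, mul_assoc, mul_assoc, ← Real.exp_add, ← Real.exp_add,
    W0GF_exponent_gh_neg_complete_square hε]

theorem integral_W0GF_gh_neg {ε : ℝ} (hε : 0 < ε) (t x : ℝ) :
    ∫ k : ℝ, W0GF ε (gh (-t) (x, k)) =
      Real.exp (-x ^ 2 / densityWidthSq ε t) / Real.sqrt (densityWidthSq ε t) := by
  have hD := densityWidthSq_pos hε.ne' t
  simp only [W0GF_gh_neg_eq_gaussian hε.ne']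
  rw [integral_const_mul,
    integral_sub_right_eq_self (fun k => Real.exp (-(densityWidthSq ε t / ε ^ 2) * k ^ 2)),
    integral_gaussian, div_div_eq_mul_div, Real.sqrt_div (by positivity),
    Real.sqrt_mul Real.pi_nonneg, Real.sqrt_sq hε.le]
  field_simp

theorem integral_W0GF_gh_neg_of_rayJacobian_eq_zero {ε t : ℝ} (hε : 0 < ε)
    (ht : rayJacobian t = 0) :
    ∫ k : ℝ, W0GF ε (gh (-t) (0, k)) = Real.sqrt 2 / ε := by
  rw [integral_W0GF_gh_neg hε, densityWidthSq_of_rayJacobian_eq_zero ht,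
    Real.sqrt_div (sq_nonneg ε), Real.sqrt_sq hε.le]
  simp

/-- The harmonic propagation `W_h^ε(x,k,t) = W_0^ε(g_h^{-t}(x,k))` of the Gauss–Fresnel Wigner
function solves the harmonic transport equation, and at each focal point
`(x_ν, t_ν) = (0, νπ - π/4)`, `ν ≥ 1`, its momentum integral equals `√2/ε` exactly. -/
theorem focal_point_amplitude (ε : ℝ) (hε : 0 < ε) :
    (∀ (t : ℝ) (p : ℝ × ℝ),
      deriv (fun s => W0GF ε (gh (-s) p)) t
        + p.2 * deriv (fun x => W0GF ε (gh (-t) (x, p.2))) p.1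
        - p.1 * deriv (fun k => W0GF ε (gh (-t) (p.1, k))) p.2 = 0) ∧
    ∀ ν : ℕ, 1 ≤ ν →
      (∫ k : ℝ, W0GF ε (gh (-((ν : ℝ) * Real.pi - Real.pi / 4)) (0, k))) =
        Real.sqrt 2 / ε := by
  refine ⟨fun t p => deriv_comp_gh_neg_transport (differentiable_W0GF ε _), fun ν _ => ?_⟩
  exact integral_W0GF_gh_neg_of_rayJacobian_eq_zero hε
    (mod_cast rayJacobian_int_mul_pi_sub_pi_div_four ν)
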